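/- For every integer n ≥ 2, every positive integer N, and every n-linear form U : (ℝ^N)^n → ℝ, one has (∑_{i₁,…,iₙ=1}^N |U(e_{i₁},…,e_{iₙ})|^{2n/(n+1)})^{(n+1)/(2n)} ≤ √2 · (n-1)^{0.526322} · ‖U‖. Consequently the optimal real multilinear Bohnenblust–Hille constant satisfies K_n ≤ √2 (n-1)^{0.526322}. -/

import Mathlib

open Real

/-- The Bohnenblust--Hille quantity of an `n`-linear form on `ℓ_∞^N` over `ℝ`:
`(∑_{i₁,…,iₙ} |U(e_{i₁},…,e_{iₙ})|^{2n/(n+1)})^{(n+1)/(2n)}`. -/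
noncomputable def BHreal (n N : ℕ)
    (U : ContinuousMultilinearMap ℝ (fun _ : Fin n => (Fin N → ℝ)) ℝ) : ℝ :=
  (∑ i : Fin n → Fin N,
      |U (fun k => Pi.single (i k) (1 : ℝ))| ^ ((2 * n : ℝ) / (n + 1)))
    ^ ((n + 1 : ℝ) / (2 * n))

/-- The optimal real multilinear Bohnenblust--Hille constant. -/
noncomputable def KrealOpt (n : ℕ) : ℝ :=
  sInf {C : ℝ | 1 ≤ C ∧ ∀ N : ℕ, 0 < N →
    ∀ U : ContinuousMultilinearMap ℝ (fun _ : Fin n => (Fin N → ℝ)) ℝ,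
      BHreal n N U ≤ C * ‖U‖}

/-!
An `(n + 1)`-linear form `U` is controlled through its lines. Hölder's and the Loomis–Whitney
inequality bound its Bohnenblust–Hille sum by mixed norms, `ℓ²` in one slot and `ℓ^p`,
`p = 2n/(n+1)`, in the others. The lower Khinchin inequality replaces the `ℓ²`-sum over a slot by
the average over signs `ε` of the `n`-linear forms obtained by inserting `ε` into that slot, whose
norms are at most `‖U‖`. Hence `K_{n+1}` is at most `K_n` times the Khinchin constant for `p`.

For `p = 1` that constant is `√2`: the modulus of a Rademacher sum is even, so its Walsh expansion
has no terms of degree one, and the Poincaré inequality on the sign cube gains a factor `2`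
(Latała–Oleszkiewicz). This lower bound for the first moment, the second moment and an upper bound
for the fourth give `𝔼 |R|^{5/2} ≤ 1.3` for a normalized Rademacher sum `R`; interpolating the
second moment between the moments `p` and `5/2` then gives the constant
`1.69^{(2-p)/p} = 1.69^{1/n}`. The product of these constants telescopes because
`1.69 ≤ e^{0.526322}` and `e^{1/n} ≤ n/(n-1)`.
-/

open scoped BigOperators NNReal

section SignCube

lemma intUnit_cast_mul_self {R : Type*} [Ring R] (u : ℤˣ) : (u : R) * u = 1 := by
  rw [← Int.cast_mul, Int.units_coe_mul_self, Int.cast_one]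

lemma abs_intUnit_cast (u : ℤˣ) : |(u : ℝ)| = 1 := by
  rw [← Int.cast_abs, Int.isUnit_iff_abs_eq.1 u.isUnit, Int.cast_one]

lemma expect_mul_left {G M : Type*} [Group G] [Fintype G] [AddCommMonoid M] [Module ℚ≥0 M]
    (f : G → M) (g : G) :
    𝔼 x, f (g * x) = 𝔼 x, f x :=
  Fintype.expect_equiv (Equiv.mulLeft g) _ _ fun _ => rfl

variable {ι : Type*}

/-- The Walsh function `ε ↦ ∏_{i ∈ S} εᵢ` on the sign cube, signs being encoded as units of `ℤ`. -/
def walsh (S : Finset ι) (ε : ι → ℤˣ) : ℝ := ∏ i ∈ S, (ε i : ℝ)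

lemma walsh_mul (S : Finset ι) (δ ε : ι → ℤˣ) : walsh S (δ * ε) = walsh S δ * walsh S ε := by
  simp [walsh, Finset.prod_mul_distrib]

lemma walsh_neg (S : Finset ι) (ε : ι → ℤˣ) : walsh S (-ε) = (-1) ^ S.card * walsh S ε := by
  simp [walsh, Finset.prod_neg]

lemma sum_walsh_mul_walsh [Fintype ι] (ε δ : ι → ℤˣ) :
    ∑ S, walsh S ε * walsh S δ = if ε = δ then 2 ^ Fintype.card ι else 0 := by
  classical
  have hprod : ∑ S, walsh S ε * walsh S δ = ∏ i, (1 + (ε i : ℝ) * δ i) := by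
    simp only [walsh, ← Finset.prod_mul_distrib, Finset.prod_one_add, Finset.powerset_univ]
  rw [hprod]
  split_ifs with h
  · simp [h, intUnit_cast_mul_self, one_add_one_eq_two]
  · obtain ⟨i, hi⟩ := Function.ne_iff.1 h
    refine Finset.prod_eq_zero (Finset.mem_univ i) ?_
    rw [Int.units_ne_iff_eq_neg.1 hi]
    simp [intUnit_cast_mul_self]

section SignFlip

variable [DecidableEq ι]

/-- The point of the sign cube obtained from `ε` by changing the `i`-th sign. -/
def signFlip (i : ι) (ε : ι → ℤˣ) : ι → ℤˣ := Pi.mulSingle i (-1) * ε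

lemma signFlip_apply (i j : ι) (ε : ι → ℤˣ) :
    signFlip i ε j = if j = i then -ε j else ε j := by
  by_cases h : j = i
  · subst h
    simp [signFlip]
  · simp [signFlip, h]

lemma signFlip_signFlip (i : ι) (ε : ι → ℤˣ) : signFlip i (signFlip i ε) = ε := by
  ext j
  simp only [signFlip_apply]
  split_ifs <;> simp

lemma walsh_signFlip (S : Finset ι) (i : ι) (ε : ι → ℤˣ) :
    walsh S (signFlip i ε) = if i ∈ S then -walsh S ε else walsh S ε := by
  have hsingle : walsh S (Pi.mulSingle i (-1)) = if i ∈ S then -1 else 1 := by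
    simp only [walsh, Pi.mulSingle_apply, apply_ite Units.val, apply_ite (Int.cast : ℤ → ℝ)]
    simp
  rw [signFlip, walsh_mul, hsingle]
  split_ifs <;> simp

end SignFlip

variable [Fintype ι] [DecidableEq ι]

/-- The Fourier coefficient of `f` at the Walsh function of `S`, for the uniform probability
measure on the sign cube. -/
noncomputable def walshCoeff (f : (ι → ℤˣ) → ℝ) (S : Finset ι) : ℝ := 𝔼 ε, f ε * walsh S ε

lemma walshCoeff_empty (f : (ι → ℤˣ) → ℝ) : walshCoeff f ∅ = 𝔼 ε, f ε := by
  simp [walshCoeff, walsh]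

theorem sum_walshCoeff_sq (f : (ι → ℤˣ) → ℝ) : ∑ S, walshCoeff f S ^ 2 = 𝔼 ε, f ε ^ 2 := by
  calc ∑ S, walshCoeff f S ^ 2
      = 𝔼 ε, 𝔼 δ, f ε * f δ * ∑ S, walsh S ε * walsh S δ := by
        simp only [sq, walshCoeff, Fintype.expect_mul_expect, Finset.mul_sum,
          Finset.expect_sum_comm, mul_mul_mul_comm]
    _ = 𝔼 ε, f ε ^ 2 := by
        refine Finset.expect_congr rfl fun ε _ => ?_
        simp only [sum_walsh_mul_walsh, mul_ite, mul_zero]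
        rw [Fintype.expect_ite_eq]
        simp only [Fintype.card_pi, Fintype.card_units_int, Finset.prod_const, Finset.card_univ,
          NNRat.smul_def]
        push_cast
        field_simp

lemma walshCoeff_eq_zero_of_odd_card {f : (ι → ℤˣ) → ℝ} (hf : ∀ ε, f (-ε) = f ε) {S : Finset ι}
    (hS : Odd S.card) : walshCoeff f S = 0 := by
  have hneg : walshCoeff f S = -walshCoeff f S := by
    calc walshCoeff f S = 𝔼 ε : ι → ℤˣ, f (-1 * ε) * walsh S (-1 * ε) :=
          (expect_mul_left (fun ε => f ε * walsh S ε) (-1)).symm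
      _ = -walshCoeff f S := by
          simp [walshCoeff, hf, walsh_neg, hS.neg_one_pow, Finset.expect_neg_distrib]
  linarith

lemma expect_comp_signFlip (i : ι) (f : (ι → ℤˣ) → ℝ) :
    𝔼 ε, f (signFlip i ε) = 𝔼 ε, f ε :=
  expect_mul_left f _

lemma walshCoeff_sub_comp_signFlip (f : (ι → ℤˣ) → ℝ) (i : ι) (S : Finset ι) :
    walshCoeff (fun ε => (f ε - f (signFlip i ε)) / 2) S = if i ∈ S then walshCoeff f S else 0 := by
  have hflip : 𝔼 ε, f (signFlip i ε) * walsh S ε = 𝔼 ε, f ε * walsh S (signFlip i ε) := by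
    rw [← expect_comp_signFlip i]
    simp only [signFlip_signFlip]
  calc walshCoeff (fun ε => (f ε - f (signFlip i ε)) / 2) S
      = (walshCoeff f S - 𝔼 ε, f ε * walsh S (signFlip i ε)) / 2 := by
        rw [← hflip, walshCoeff, walshCoeff, ← Finset.expect_sub_distrib, Finset.expect_div]
        exact Finset.expect_congr rfl fun ε _ => by ring
    _ = if i ∈ S then walshCoeff f S else 0 := by
        simp only [walsh_signFlip]
        split_ifs
        · simp [walshCoeff, Finset.expect_neg_distrib]
        · simp [walshCoeff]

/-- The total influence `∑ᵢ ‖Dᵢ f‖₂²` of a function on the sign cube, i.e. its Dirichlet form. The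
discrete derivative `Dᵢ f ε = (f ε - f (signFlip i ε)) / 2` is half the difference along an edge. -/
noncomputable def totalInfluence (f : (ι → ℤˣ) → ℝ) : ℝ :=
  ∑ i, 𝔼 ε, ((f ε - f (signFlip i ε)) / 2) ^ 2

lemma totalInfluence_eq_sum_walshCoeff_sq (f : (ι → ℤˣ) → ℝ) :
    totalInfluence f = ∑ S : Finset ι, S.card * walshCoeff f S ^ 2 := by
  simp only [totalInfluence, ← sum_walshCoeff_sq, walshCoeff_sub_comp_signFlip]
  rw [Finset.sum_comm]
  simp

lemma totalInfluence_eq_sum_expect_mul (f : (ι → ℤˣ) → ℝ) :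
    totalInfluence f = ∑ i, 𝔼 ε, f ε * (f ε - f (signFlip i ε)) / 2 := by
  refine Finset.sum_congr rfl fun i _ => ?_
  have hsq := expect_comp_signFlip i fun ε => f ε ^ 2 / 4
  rw [← sub_eq_zero] at hsq ⊢
  rw [← hsq, ← Finset.expect_sub_distrib, ← Finset.expect_sub_distrib]
  exact Finset.expect_congr rfl fun ε _ => by ring

-- The coefficients at level one of an even function vanish, so the Poincaré inequality gains
-- a factor two.
theorem two_mul_variance_le_totalInfluence {f : (ι → ℤˣ) → ℝ} (hf : ∀ ε, f (-ε) = f ε) :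
    2 * (𝔼 ε, f ε ^ 2 - (𝔼 ε, f ε) ^ 2) ≤ totalInfluence f := by
  have hterm : ∀ S ∈ Finset.univ.erase (∅ : Finset ι),
      2 * walshCoeff f S ^ 2 ≤ S.card * walshCoeff f S ^ 2 := fun S hS => by
    have hcard : S.card ≠ 0 := by simpa using hS
    rcases eq_or_ne S.card 1 with h | h
    · rw [walshCoeff_eq_zero_of_odd_card hf (h ▸ odd_one)]
      simp
    · have : 2 ≤ S.card := by omega
      gcongr
      exact_mod_cast this
  have hsum := Finset.sum_le_sum hterm
  rw [← Finset.mul_sum, Finset.sum_erase_eq_sub (Finset.mem_univ _), sum_walshCoeff_sq,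
    walshCoeff_empty] at hsum
  refine hsum.trans ?_
  rw [totalInfluence_eq_sum_walshCoeff_sq]
  exact Finset.sum_le_sum_of_subset_of_nonneg (Finset.erase_subset _ _) fun S _ _ => by positivity

/-- The Rademacher sum `∑ᵢ εᵢ aᵢ`, as a function of the signs. -/
def rademacherSum (a : ι → ℝ) (ε : ι → ℤˣ) : ℝ := ∑ i, (ε i : ℝ) * a i

omit [DecidableEq ι] in
lemma rademacherSum_neg (a : ι → ℝ) (ε : ι → ℤˣ) :
    rademacherSum a (-ε) = -rademacherSum a ε := by
  simp [rademacherSum]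

lemma rademacherSum_signFlip (a : ι → ℝ) (i : ι) (ε : ι → ℤˣ) :
    rademacherSum a (signFlip i ε) = rademacherSum a ε - 2 * (ε i * a i) := by
  have hterm : ∀ j, (signFlip i ε j : ℝ) * a j =
      ε j * a j - if j = i then 2 * (ε i * a i) else 0 := fun j => by
    rw [signFlip_apply]
    split_ifs with h
    · subst h
      push_cast
      ring
    · simp
  simp [rademacherSum, hterm]

lemma expect_rademacherSum_mul (a : ι → ℝ) (g : (ι → ℤˣ) → ℝ) :
    𝔼 ε, rademacherSum a ε * g ε =
      ∑ i, 𝔼 ε, ε i * a i * (g ε - g (signFlip i ε)) / 2 := by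
  simp only [rademacherSum, Finset.sum_mul, Finset.expect_sum_comm]
  refine Finset.sum_congr rfl fun i _ => ?_
  have hflip := (expect_comp_signFlip i fun ε => ε i * a i * g ε / 2).symm
  rw [← sub_eq_zero] at hflip ⊢
  rw [← hflip, ← Finset.expect_sub_distrib, ← Finset.expect_sub_distrib]
  refine Finset.expect_congr rfl fun ε _ => ?_
  simp only [signFlip_apply, if_true]
  push_cast
  ring

lemma sq_intUnit_cast_mul (u : ℤˣ) (x : ℝ) : ((u : ℝ) * x) ^ 2 = x ^ 2 := by
  rw [mul_pow, sq (u : ℝ), intUnit_cast_mul_self, one_mul]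

theorem expect_rademacherSum_sq (a : ι → ℝ) :
    𝔼 ε, rademacherSum a ε ^ 2 = ∑ i, a i ^ 2 := by
  simp only [sq (rademacherSum a _), expect_rademacherSum_mul]
  refine Finset.sum_congr rfl fun i _ => ?_
  rw [← Fintype.expect_const (ι := ι → ℤˣ) (a i ^ 2)]
  refine Finset.expect_congr rfl fun ε _ => ?_
  rw [rademacherSum_signFlip, ← sq_intUnit_cast_mul (ε i)]
  ring

theorem expect_rademacherSum_pow_four_le (a : ι → ℝ) :
    𝔼 ε, rademacherSum a ε ^ 4 ≤ 3 * (∑ i, a i ^ 2) ^ 2 := by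
  have hterm : ∀ i ε, ε i * a i * (rademacherSum a ε ^ 3 - rademacherSum a (signFlip i ε) ^ 3) / 2
      ≤ 3 * a i ^ 2 * ((rademacherSum a ε ^ 2 + rademacherSum a (signFlip i ε) ^ 2) / 2) := by
    intro i ε
    rw [rademacherSum_signFlip, ← sq_intUnit_cast_mul (ε i) (a i)]
    set d := (ε i : ℝ) * a i
    nlinarith [sq_nonneg (d ^ 2)]
  calc 𝔼 ε, rademacherSum a ε ^ 4
      = ∑ i, 𝔼 ε, ε i * a i * (rademacherSum a ε ^ 3 - rademacherSum a (signFlip i ε) ^ 3) / 2 := by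
        rw [← expect_rademacherSum_mul a fun ε => rademacherSum a ε ^ 3]
        simp only [← pow_succ']
    _ ≤ ∑ i, 𝔼 ε,
          3 * a i ^ 2 * ((rademacherSum a ε ^ 2 + rademacherSum a (signFlip i ε) ^ 2) / 2) :=
        Finset.sum_le_sum fun i _ => Finset.expect_le_expect fun ε _ => hterm i ε
    _ = ∑ i, 3 * a i ^ 2 * ∑ j, a j ^ 2 := by
        refine Finset.sum_congr rfl fun i _ => ?_
        rw [← Finset.mul_expect, ← Finset.expect_div, Finset.expect_add_distrib,
          expect_comp_signFlip i fun ε => rademacherSum a ε ^ 2, expect_rademacherSum_sq,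
          add_self_div_two]
    _ = 3 * (∑ i, a i ^ 2) ^ 2 := by
        rw [← Finset.sum_mul, ← Finset.mul_sum]
        ring

lemma totalInfluence_abs_rademacherSum_le (a : ι → ℝ) :
    totalInfluence (fun ε => |rademacherSum a ε|) ≤ ∑ i, a i ^ 2 := by
  have hflip : ∀ ε, (Fintype.card ι - 2) * |rademacherSum a ε| ≤
      ∑ i, |rademacherSum a (signFlip i ε)| := fun ε => by
    calc (Fintype.card ι - 2) * |rademacherSum a ε|
        ≤ |(Fintype.card ι - 2) * rademacherSum a ε| := by
          rw [abs_mul]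
          gcongr
          exact le_abs_self _
      _ = |∑ i, rademacherSum a (signFlip i ε)| := by
          simp only [rademacherSum_signFlip, Finset.sum_sub_distrib, ← Finset.mul_sum]
          simp [rademacherSum, sub_mul]
      _ ≤ ∑ i, |rademacherSum a (signFlip i ε)| := Finset.abs_sum_le_sum_abs _ _
  rw [totalInfluence_eq_sum_expect_mul, ← Finset.expect_sum_comm, ← expect_rademacherSum_sq]
  refine Finset.expect_le_expect fun ε _ => ?_
  rw [← Finset.sum_div, ← Finset.mul_sum, Finset.sum_sub_distrib, ← sq_abs (rademacherSum a ε)]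
  have habs := abs_nonneg (rademacherSum a ε)
  have hsum : ∑ _i : ι, |rademacherSum a ε| = Fintype.card ι * |rademacherSum a ε| := by simp
  rw [hsum]
  nlinarith [hflip ε]

theorem sum_sq_le_two_mul_sq_expect_abs_rademacherSum (a : ι → ℝ) :
    ∑ i, a i ^ 2 ≤ 2 * (𝔼 ε, |rademacherSum a ε|) ^ 2 := by
  have hvar := two_mul_variance_le_totalInfluence (f := fun ε => |rademacherSum a ε|)
    fun ε => by rw [rademacherSum_neg, abs_neg]
  simp only [sq_abs, expect_rademacherSum_sq] at hvar
  linarith [totalInfluence_abs_rademacherSum_le a]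

-- As a polynomial in `√t`, the difference of the two sides nearly has double zeros at `0.48` and
-- `1.33` (found numerically), which is where the squares in the proof come from.
lemma rpow_five_halves_le {t : ℝ} (ht : 0 ≤ t) :
    t ^ (5 / 2 : ℝ) ≤ 0.029 - 0.2938 * t + 1.229 * t ^ 2 + 0.0827 * t ^ 4 := by
  obtain ⟨y, hy, rfl⟩ : ∃ y, 0 ≤ y ∧ y ^ 2 = t := ⟨√t, Real.sqrt_nonneg t, Real.sq_sqrt ht⟩
  have hrpow : (y ^ 2) ^ (5 / 2 : ℝ) = y ^ 5 := by
    rw [← Real.rpow_natCast, ← Real.rpow_mul hy, ← Real.rpow_natCast]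
    norm_num
  have hsq : ∀ k, 0 ≤ y ^ k * ((y - 0.48) * (y - 1.33)) ^ 2 := fun k => by positivity
  rw [hrpow]
  nlinarith [hsq 0, hsq 1, hsq 2, hsq 3, hsq 4, pow_nonneg hy 2, pow_nonneg hy 3, pow_nonneg hy 4,
    pow_nonneg hy 5, pow_nonneg hy 6, pow_nonneg hy 7, pow_nonneg hy 8]

lemma expect_abs_rademacherSum_rpow_five_halves_le {a : ι → ℝ} (ha : ∑ i, a i ^ 2 = 1) :
    𝔼 ε, |rademacherSum a ε| ^ (5 / 2 : ℝ) ≤ 1.3 := by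
  have hone : 0.707 ≤ 𝔼 ε, |rademacherSum a ε| := by
    have hnonneg : 0 ≤ 𝔼 ε, |rademacherSum a ε| := Finset.expect_nonneg fun ε _ => abs_nonneg _
    have hkhinchin := sum_sq_le_two_mul_sq_expect_abs_rademacherSum a
    refine le_of_sq_le_sq ?_ hnonneg
    linarith
  have hfour := expect_rademacherSum_pow_four_le a
  rw [ha] at hfour
  calc 𝔼 ε, |rademacherSum a ε| ^ (5 / 2 : ℝ)
      ≤ 𝔼 ε, (0.029 - 0.2938 * |rademacherSum a ε| + 1.229 * rademacherSum a ε ^ 2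
          + 0.0827 * rademacherSum a ε ^ 4) := Finset.expect_le_expect fun ε _ => by
        simpa only [sq_abs, Even.pow_abs (show Even 4 by decide)]
          using rpow_five_halves_le (abs_nonneg (rademacherSum a ε))
    _ = 0.029 - 0.2938 * 𝔼 ε, |rademacherSum a ε| + 1.229 * 1
          + 0.0827 * 𝔼 ε, rademacherSum a ε ^ 4 := by
        rw [Finset.expect_add_distrib, Finset.expect_add_distrib, Finset.expect_sub_distrib,
          Fintype.expect_const, ← Finset.mul_expect, ← Finset.mul_expect, ← Finset.mul_expect,
          expect_rademacherSum_sq, ha]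
    _ ≤ 1.3 := by linarith

lemma expect_rpow_interpolate {α : Type*} (s : Finset α) {f : α → ℝ} (hf : ∀ i, 0 ≤ f i)
    {p q r : ℝ} (hp : 0 ≤ p) (hpq : p < q) (hqr : q ≤ r) :
    (𝔼 i ∈ s, f i ^ q) ^ (r - p) ≤
      (𝔼 i ∈ s, f i ^ p) ^ (r - q) * (𝔼 i ∈ s, f i ^ r) ^ (q - p) := by
  have hrp : 0 < r - p := by linarith
  have hqp : 0 < q - p := by linarith
  have hexp : ∀ t : ℝ, 0 ≤ 𝔼 i ∈ s, f i ^ t := fun t =>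
    Finset.expect_nonneg fun i _ => Real.rpow_nonneg (hf i) t
  have hmul : ∀ i, f i ^ p * f i ^ (q - p) = f i ^ q := fun i => by
    rw [← Real.rpow_add_of_nonneg (hf i) hp hqp.le, add_sub_cancel]
  have hmul_rpow : ∀ i, f i ^ p * (f i ^ (q - p)) ^ ((r - p) / (q - p)) = f i ^ r := fun i => by
    rw [← Real.rpow_mul (hf i), mul_div_cancel₀ _ hqp.ne',
      ← Real.rpow_add_of_nonneg (hf i) hp hrp.le, add_sub_cancel]
  have hholder := Real.compact_inner_le_weight_mul_Lp_of_nonneg s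
    (show 1 ≤ (r - p) / (q - p) by rw [one_le_div hqp]; linarith)
    (fun i => Real.rpow_nonneg (hf i) p) (fun i => Real.rpow_nonneg (hf i) (q - p))
  simp only [hmul, hmul_rpow, inv_div] at hholder
  calc (𝔼 i ∈ s, f i ^ q) ^ (r - p)
      ≤ ((𝔼 i ∈ s, f i ^ p) ^ (1 - (q - p) / (r - p)) *
          (𝔼 i ∈ s, f i ^ r) ^ ((q - p) / (r - p))) ^ (r - p) :=
        Real.rpow_le_rpow (hexp q) hholder hrp.le
    _ = (𝔼 i ∈ s, f i ^ p) ^ (r - q) * (𝔼 i ∈ s, f i ^ r) ^ (q - p) := by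
        rw [Real.mul_rpow (Real.rpow_nonneg (hexp p) _) (Real.rpow_nonneg (hexp r) _),
          ← Real.rpow_mul (hexp p), ← Real.rpow_mul (hexp r), sub_mul,
          div_mul_cancel₀ _ hrp.ne']
        ring_nf

variable (ι) in
/-- The lower Khinchin inequality `‖a‖₂ ≤ C ‖∑ᵢ εᵢ aᵢ‖_p` for coefficients indexed by `ι`. Both
sides are raised to the power `p`, which is the form in which it gets summed. -/
def KhinchinBound (p C : ℝ) : Prop :=
  ∀ a : ι → ℝ, (∑ i, a i ^ 2) ^ (p / 2) ≤ C ^ p * 𝔼 ε, |rademacherSum a ε| ^ p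

lemma khinchinBound_of_sum_sq_eq_one {p C : ℝ} (hp : 0 < p) (hC : 0 ≤ C)
    (h : ∀ a : ι → ℝ, ∑ i, a i ^ 2 = 1 → 1 ≤ C ^ p * 𝔼 ε, |rademacherSum a ε| ^ p) :
    KhinchinBound ι p C := by
  intro a
  set σ := ∑ i, a i ^ 2
  have hσ_nonneg : 0 ≤ σ := Finset.sum_nonneg fun i _ => sq_nonneg _
  rcases hσ_nonneg.eq_or_lt with hzero | hpos
  · rw [← hzero, Real.zero_rpow (by positivity)]
    positivity
  · have hunit : ∑ i, (a i / √σ) ^ 2 = 1 := by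
      simp only [div_pow, Real.sq_sqrt hσ_nonneg, ← Finset.sum_div]
      exact div_self hpos.ne'
    have hscale : ∀ ε, |rademacherSum (fun i => a i / √σ) ε| ^ p =
        |rademacherSum a ε| ^ p / σ ^ (p / 2) := fun ε => by
      have hdiv : rademacherSum (fun i => a i / √σ) ε = rademacherSum a ε / √σ := by
        simp only [rademacherSum, mul_div_assoc', Finset.sum_div]
      rw [hdiv, abs_div, abs_of_nonneg (Real.sqrt_nonneg σ),
        Real.div_rpow (abs_nonneg _) (Real.sqrt_nonneg σ), Real.sqrt_eq_rpow,
        ← Real.rpow_mul hσ_nonneg, one_div_mul_eq_div]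
    have hbound := h _ hunit
    simp only [hscale, ← Finset.expect_div] at hbound
    rwa [mul_div_assoc', one_le_div (by positivity)] at hbound

theorem khinchinBound_one : KhinchinBound ι 1 √2 := by
  intro a
  have hnonneg : 0 ≤ 𝔼 ε, |rademacherSum a ε| := Finset.expect_nonneg fun ε _ => abs_nonneg _
  simp only [Real.rpow_one, ← Real.sqrt_eq_rpow]
  rw [← Real.sqrt_sq hnonneg, ← Real.sqrt_mul zero_le_two]
  exact Real.sqrt_le_sqrt (sum_sq_le_two_mul_sq_expect_abs_rademacherSum a)

theorem khinchinBound_of_lt_two {p : ℝ} (hp : 0 < p) (hp2 : p < 2) :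
    KhinchinBound ι p (1.69 ^ ((2 - p) / p)) := by
  refine khinchinBound_of_sum_sq_eq_one hp (by positivity) fun a ha => ?_
  have hnonneg : ∀ t : ℝ, 0 ≤ 𝔼 ε, |rademacherSum a ε| ^ t := fun t =>
    Finset.expect_nonneg fun ε _ => Real.rpow_nonneg (abs_nonneg _) t
  have hsq : 𝔼 ε, |rademacherSum a ε| ^ (2 : ℝ) = 1 := by
    simp only [Real.rpow_two, sq_abs, expect_rademacherSum_sq, ha]
  have hinterp := expect_rpow_interpolate Finset.univ (fun ε => abs_nonneg (rademacherSum a ε))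
    hp.le hp2 (show (2 : ℝ) ≤ 5 / 2 by norm_num)
  rw [hsq, Real.one_rpow] at hinterp
  have hroot : 1 ≤ (𝔼 ε, |rademacherSum a ε| ^ p) ^ (1 / 2 : ℝ) * 1.3 ^ (2 - p) := by
    refine hinterp.trans ?_
    have hexp : (5 / 2 - 2 : ℝ) = 1 / 2 := by norm_num
    rw [hexp]
    gcongr
    exact expect_abs_rademacherSum_rpow_five_halves_le ha
  calc (1 : ℝ) ≤ ((𝔼 ε, |rademacherSum a ε| ^ p) ^ (1 / 2 : ℝ) * 1.3 ^ (2 - p)) ^ 2 :=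
        one_le_pow₀ hroot
    _ = (1.3 ^ 2) ^ (2 - p) * 𝔼 ε, |rademacherSum a ε| ^ p := by
        rw [mul_pow, ← Real.sqrt_eq_rpow, Real.sq_sqrt (hnonneg p),
          Real.rpow_pow_comm (by norm_num), mul_comm]
    _ = (1.69 ^ ((2 - p) / p)) ^ p * 𝔼 ε, |rademacherSum a ε| ^ p := by
        rw [← Real.rpow_mul (by norm_num), div_mul_cancel₀ _ hp.ne']
        norm_num

lemma khinchinBound_two_mul_div_succ {n : ℕ} (hn : n ≠ 0) :
    KhinchinBound ι (2 * n / (n + 1)) (1.69 ^ (n : ℝ)⁻¹) := by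
  have hlt : (2 * n / (n + 1) : ℝ) < 2 := by
    rw [div_lt_iff₀ (by positivity)]
    linarith
  have hexponent : (2 - 2 * n / (n + 1)) / (2 * n / (n + 1)) = (n : ℝ)⁻¹ := by
    field_simp
    ring
  simpa only [hexponent] using khinchinBound_of_lt_two (ι := ι) (by positivity) hlt

end SignCube

section MixedNorm

theorem sum_prod_rpow_le_prod_sum_rpow {ι κ : Type*} [Fintype ι] [Fintype κ] (F : κ → ι → ℝ≥0)
    {w : κ → ℝ} (hw : ∀ k, 0 ≤ w k) (hsum : ∑ k, w k = 1) :
    ∑ i, ∏ k, F k i ^ w k ≤ ∏ k, (∑ i, F k i) ^ w k := by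
  lift w to κ → ℝ≥0 using hw
  beta_reduce at hsum
  norm_cast at hsum
  have hfactor : ∀ i, ∏ k, F k i ^ (w k : ℝ) =
      (∏ k, (F k i / ∑ j, F k j) ^ (w k : ℝ)) * ∏ k, (∑ j, F k j) ^ (w k : ℝ) := fun i => by
    rw [← Finset.prod_mul_distrib]
    refine Finset.prod_congr rfl fun k _ => ?_
    rw [← NNReal.mul_rpow, div_mul_cancel_of_imp fun h =>
      Finset.sum_eq_zero_iff.1 h i (Finset.mem_univ i)]
  have hnormalized : ∑ i, ∏ k, (F k i / ∑ j, F k j) ^ (w k : ℝ) ≤ 1 := by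
    calc ∑ i, ∏ k, (F k i / ∑ j, F k j) ^ (w k : ℝ)
        ≤ ∑ i, ∑ k, w k * (F k i / ∑ j, F k j) :=
          Finset.sum_le_sum fun i _ => NNReal.geom_mean_le_arith_mean_weighted _ _ _ hsum
      _ = ∑ k, w k * ((∑ i, F k i) / ∑ j, F k j) := by
          rw [Finset.sum_comm]
          simp only [← Finset.mul_sum, ← Finset.sum_div]
      _ ≤ ∑ k, w k * 1 := by
          gcongr
          exact div_self_le_one _
      _ = 1 := by simpa only [mul_one] using hsum
  simp only [hfactor, ← Finset.sum_mul]
  exact mul_le_of_le_one_left zero_le hnormalized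

lemma sum_rpow_mul_rpow_le {ι : Type*} [Fintype ι] (f g : ι → ℝ≥0) {v w : ℝ} (hv : 0 ≤ v)
    (hw : 0 ≤ w) (hvw : v + w = 1) :
    ∑ i, f i ^ v * g i ^ w ≤ (∑ i, f i) ^ v * (∑ i, g i) ^ w := by
  simpa [Fin.prod_univ_two] using sum_prod_rpow_le_prod_sum_rpow ![f, g] (w := ![v, w])
    (by simp [Fin.forall_fin_two, hv, hw]) (by simpa using hvw)

variable {I : Type*} [Fintype I]

lemma sum_eq_sum_sum_insertNth {M : Type*} [AddCommMonoid M] {n : ℕ} (k : Fin (n + 1))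
    (f : (Fin (n + 1) → I) → M) :
    ∑ i, f i = ∑ t, ∑ j : Fin n → I, f (k.insertNth t j) := by
  rw [← (Fin.insertNthEquiv (fun _ => I) k).sum_comp, Fintype.sum_prod_type]
  rfl

lemma sum_eq_sum_sum_cons {M : Type*} [AddCommMonoid M] {n : ℕ} (f : (Fin (n + 1) → I) → M) :
    ∑ i, f i = ∑ t, ∑ j : Fin n → I, f (Fin.cons t j) := by
  simpa only [Fin.insertNth_zero'] using sum_eq_sum_sum_insertNth 0 f

lemma removeNth_zero_cons {α : Type*} {n : ℕ} (t : α) (i : Fin n → α) :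
    (0 : Fin (n + 1)).removeNth (Fin.cons t i : Fin (n + 1) → α) = i :=
  rfl

lemma removeNth_succ_cons {α : Type*} {n : ℕ} (k : Fin (n + 1)) (t : α) (i : Fin (n + 1) → α) :
    k.succ.removeNth (Fin.cons t i : Fin (n + 2) → α) = Fin.cons t (k.removeNth i) := by
  funext j
  cases j using Fin.cases <;> simp [Fin.removeNth]

lemma prod_rpow_one_div_succ {κ : Type*} (s : Finset κ) (x : κ → ℝ≥0) {n : ℕ} (hn : n ≠ 0) :
    ∏ k ∈ s, x k ^ (1 / (n + 1) : ℝ) = (∏ k ∈ s, x k ^ (1 / n : ℝ)) ^ (n / (n + 1) : ℝ) := by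
  rw [← NNReal.finsetProd_rpow]
  refine Finset.prod_congr rfl fun k _ => ?_
  rw [← NNReal.rpow_mul]
  congr 1
  field_simp

lemma sum_prod_removeNth_two (F : Fin 2 → (Fin 1 → I) → ℝ≥0) :
    ∑ i : Fin 2 → I, ∏ k, F k (k.removeNth i) = ∏ k, ∑ j, F k j := by
  have hcons : ∀ t (j : Fin 1 → I), (1 : Fin 2).removeNth (Fin.cons t j : Fin 2 → I) = fun _ => t :=
    fun t j => funext fun l => by fin_cases l; rfl
  simp only [sum_eq_sum_sum_cons (n := 1), Fin.prod_univ_two, removeNth_zero_cons, hcons]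
  rw [← (Equiv.funUnique (Fin 1) I).symm.sum_comp (F 1), Finset.sum_mul_sum, Finset.sum_comm]
  rfl

theorem sum_prod_removeNth_rpow_le {n : ℕ} (hn : 1 ≤ n)
    (F : Fin (n + 1) → (Fin n → I) → ℝ≥0) :
    ∑ i : Fin (n + 1) → I, ∏ k, F k (k.removeNth i) ^ (1 / n : ℝ) ≤
      ∏ k, (∑ j, F k j) ^ (1 / n : ℝ) := by
  induction n, hn using Nat.le_induction with
  | base => simpa only [Nat.cast_one, div_one, NNReal.rpow_one] using (sum_prod_removeNth_two F).le
  | succ n hn ih =>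
    have hfibre : ∀ t, ∑ i : Fin (n + 1) → I, F 0 i ^ (1 / (n + 1) : ℝ) *
          ∏ k : Fin (n + 1), F k.succ (Fin.cons t (k.removeNth i)) ^ (1 / (n + 1) : ℝ) ≤
        (∑ j, F 0 j) ^ (1 / (n + 1) : ℝ) *
          ∏ k : Fin (n + 1), (∑ j : Fin n → I, F k.succ (Fin.cons t j)) ^ (1 / (n + 1) : ℝ) := by
      intro t
      simp only [prod_rpow_one_div_succ _ _ (Nat.one_le_iff_ne_zero.1 hn)]
      refine (sum_rpow_mul_rpow_le _ _ (by positivity) (by positivity)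
        (by field_simp; ring)).trans ?_
      gcongr
      exact ih fun k j => F k.succ (Fin.cons t j)
    have hholder : ∑ t, ∏ k : Fin (n + 1),
          (∑ j : Fin n → I, F k.succ (Fin.cons t j)) ^ (1 / (n + 1) : ℝ) ≤
        ∏ k : Fin (n + 1), (∑ j, F k.succ j) ^ (1 / (n + 1) : ℝ) := by
      refine (sum_prod_rpow_le_prod_sum_rpow _ (fun _ => by positivity) ?_).trans_eq ?_
      · rw [Fin.sum_const, nsmul_eq_mul]
        push_cast
        field_simp
      · refine Finset.prod_congr rfl fun k _ => ?_
        rw [sum_eq_sum_sum_cons]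
    simp only [sum_eq_sum_sum_cons (n := n + 1), Fin.prod_univ_succ (n := n + 1),
      removeNth_zero_cons, removeNth_succ_cons]
    push_cast
    refine (Finset.sum_le_sum fun t _ => hfibre t).trans ?_
    rw [← Finset.mul_sum]
    gcongr

lemma sum_prod_removeNth_rpow_one_div_succ_le {n : ℕ} (hn : 1 ≤ n)
    (F : Fin (n + 1) → (Fin n → I) → ℝ≥0) :
    ∑ i : Fin (n + 1) → I, ∏ k, F k (k.removeNth i) ^ (1 / (n + 1) : ℝ) ≤
      ∏ k, (∑ j, F k j ^ (n / (n + 1) : ℝ)) ^ (1 / n : ℝ) := by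
  have hroot : ∀ x : ℝ≥0, x ^ (1 / (n + 1) : ℝ) = (x ^ (n / (n + 1) : ℝ)) ^ (1 / n : ℝ) :=
    fun x => by
      rw [← NNReal.rpow_mul]
      congr 1
      field_simp
  simp only [hroot]
  exact sum_prod_removeNth_rpow_le hn fun k j => F k j ^ (n / (n + 1) : ℝ)

/-- The sum of `c` over the line in direction `k` whose remaining coordinates are `j`. For `c` the
squared coefficients of a multilinear form, these are the inner `ℓ²`-sums of the mixed norms. -/
def lineSum {M : Type*} [AddCommMonoid M] {n : ℕ} (k : Fin (n + 1)) (c : (Fin (n + 1) → I) → M)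
    (j : Fin n → I) : M :=
  ∑ t, c (k.insertNth t j)

lemma eq_zero_of_lineSum_eq_zero {n : ℕ} {k : Fin (n + 1)} {c : (Fin (n + 1) → I) → ℝ≥0}
    {i : Fin (n + 1) → I} (h : lineSum k c (k.removeNth i) = 0) : c i = 0 := by
  have hterm := Finset.sum_eq_zero_iff.1 h (i k) (Finset.mem_univ _)
  rwa [Fin.insertNth_self_removeNth] at hterm

lemma sum_div_lineSum_rpow {n : ℕ} (k : Fin (n + 1)) (c : (Fin (n + 1) → I) → ℝ≥0) {θ : ℝ}
    (hθ : θ ≠ 1) :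
    ∑ i, c i / lineSum k c (k.removeNth i) ^ θ = ∑ j, lineSum k c j ^ (1 - θ) := by
  rw [sum_eq_sum_sum_insertNth k, Finset.sum_comm]
  refine Finset.sum_congr rfl fun j _ => ?_
  simp only [Fin.removeNth_insertNth, ← Finset.sum_div]
  rw [NNReal.rpow_one_sub' (sub_ne_zero.2 hθ.symm)]
  rfl

lemma lineSum_nonneg {n : ℕ} (k : Fin (n + 1)) {c : (Fin (n + 1) → I) → ℝ} (hc : ∀ i, 0 ≤ c i)
    (j : Fin n → I) : 0 ≤ lineSum k c j :=
  Finset.sum_nonneg fun _ _ => hc _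

lemma prod_rpow_mul_prod_div_rpow {κ : Type*} [Fintype κ] {x : ℝ≥0} {y : κ → ℝ≥0}
    (hy : ∀ k, y k = 0 → x = 0) (w : ℝ) :
    (∏ k, y k) ^ w * ∏ k, (x / y k) ^ w = x ^ (Fintype.card κ * w) := by
  rw [NNReal.finsetProd_rpow, ← NNReal.mul_rpow, ← Finset.prod_mul_distrib]
  simp only [mul_div_cancel_of_imp' (hy _), Finset.prod_const, Finset.card_univ]
  rw [← NNReal.rpow_natCast, ← NNReal.rpow_mul]

lemma sum_rpow_le_sum_prod_lineSum_mul {n : ℕ} {θ : ℝ} (hθ : θ ≠ 0) (hθ_one : θ ≠ 1)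
    (c : (Fin (n + 1) → I) → ℝ≥0) :
    ∑ i, c i ^ ((n + 1) / (n + 2) : ℝ) ≤
      (∑ i : Fin (n + 1) → I, ∏ k, lineSum k c (k.removeNth i) ^ θ) ^ (1 / (n + 2) : ℝ) *
        ∏ k, (∑ j, lineSum k c j ^ (1 - θ)) ^ (1 / (n + 2) : ℝ) := by
  set w : ℝ := 1 / (n + 2) with hw
  set g : Fin (n + 1) → (Fin (n + 1) → I) → ℝ≥0 := fun k i => lineSum k c (k.removeNth i) ^ θ
  have hsupport : ∀ i k, g k i = 0 → c i = 0 := fun i k h =>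
    eq_zero_of_lineSum_eq_zero ((NNReal.rpow_eq_zero hθ).1 h)
  have hfactor : ∀ i, (∏ k, g k i) ^ w * ∏ k, (c i / g k i) ^ w =
      c i ^ ((n + 1) / (n + 2) : ℝ) := fun i => by
    rw [prod_rpow_mul_prod_div_rpow (hsupport i), Fintype.card_fin, hw, mul_one_div]
    push_cast
    rfl
  have hslice : ∀ k, ∑ i, c i / g k i = ∑ j, lineSum k c j ^ (1 - θ) := fun k =>
    sum_div_lineSum_rpow k c hθ_one
  have hweights : ∑ _o : Option (Fin (n + 1)), w = 1 := by
    rw [Finset.sum_const, Finset.card_univ, Fintype.card_option, Fintype.card_fin, nsmul_eq_mul, hw]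
    push_cast
    field_simp
    ring
  have hholder := sum_prod_rpow_le_prod_sum_rpow
    (fun (o : Option (Fin (n + 1))) i => o.elim (∏ k, g k i) fun k => c i / g k i)
    (w := fun _ => w) (fun _ => by positivity) hweights
  simpa only [Fintype.prod_option, Option.elim_none, Option.elim_some, hfactor, hslice]
    using hholder

-- In the previous lemma, `θ = 1 / (n + 1)` is the choice for which the Loomis–Whitney inequality
-- bounds the first factor by the same mixed norms as occur in the second.
theorem sum_rpow_le_prod_sum_lineSum_rpow {n : ℕ} (hn : 1 ≤ n) (c : (Fin (n + 1) → I) → ℝ≥0) :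
    ∑ i, c i ^ ((n + 1) / (n + 2) : ℝ) ≤
      ∏ k, (∑ j, lineSum k c j ^ (n / (n + 1) : ℝ)) ^ ((n + 1) / (n * (n + 2)) : ℝ) := by
  have hn_pos : (0 : ℝ) < n := by exact_mod_cast hn
  have hsub : (1 - 1 / (n + 1) : ℝ) = n / (n + 1) := by field_simp; ring
  have hne_one : (1 / (n + 1) : ℝ) ≠ 1 := by
    rw [Ne, div_eq_one_iff_eq (by positivity)]
    linarith
  have hholder := sum_rpow_le_sum_prod_lineSum_mul (by positivity) hne_one c
  rw [hsub] at hholder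
  set S : Fin (n + 1) → ℝ≥0 := fun k => ∑ j, lineSum k c j ^ (n / (n + 1) : ℝ)
  calc ∑ i, c i ^ ((n + 1) / (n + 2) : ℝ)
      ≤ (∑ i : Fin (n + 1) → I, ∏ k, lineSum k c (k.removeNth i) ^ (1 / (n + 1) : ℝ)) ^
          (1 / (n + 2) : ℝ) * ∏ k, S k ^ (1 / (n + 2) : ℝ) := hholder
    _ ≤ (∏ k, S k ^ (1 / n : ℝ)) ^ (1 / (n + 2) : ℝ) * ∏ k, S k ^ (1 / (n + 2) : ℝ) := by
        gcongr
        exact sum_prod_removeNth_rpow_one_div_succ_le hn fun k => lineSum k c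
    _ = ∏ k, S k ^ ((n + 1) / (n * (n + 2)) : ℝ) := by
        rw [← NNReal.finsetProd_rpow, ← Finset.prod_mul_distrib]
        refine Finset.prod_congr rfl fun k _ => ?_
        rw [← NNReal.rpow_mul, ← NNReal.rpow_add_of_nonneg _ (by positivity) (by positivity)]
        congr 1
        field_simp
        ring

end MixedNorm

section BohnenblustHille

variable {n N : ℕ}

/-- The coefficient `U(e_{i₁}, …, e_{iₙ})` of an `n`-linear form. -/
noncomputable def formCoeff (U : ContinuousMultilinearMap ℝ (fun _ : Fin n => (Fin N → ℝ)) ℝ)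
    (i : Fin n → Fin N) : ℝ :=
  U fun k => Pi.single (i k) 1

lemma abs_formCoeff_le (U : ContinuousMultilinearMap ℝ (fun _ : Fin n => (Fin N → ℝ)) ℝ)
    (i : Fin n → Fin N) : |formCoeff U i| ≤ ‖U‖ :=
  U.unit_le_opNorm <| (pi_norm_le_iff_of_nonneg zero_le_one).2 fun k => by
    rw [Pi.norm_single, norm_one]

lemma formCoeff_curryMid (U : ContinuousMultilinearMap ℝ (fun _ : Fin (n + 1) => (Fin N → ℝ)) ℝ)
    (k : Fin (n + 1)) (v : Fin N → ℝ) (j : Fin n → Fin N) :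
    formCoeff (U.curryMid k v) j = ∑ t, v t * formCoeff U (k.insertNth t j) := by
  have hbasis : ∀ t, formCoeff (U.curryMid k (Pi.single t 1)) j =
      formCoeff U (k.insertNth t j) := fun t => by
    rw [formCoeff, ContinuousMultilinearMap.curryMid_apply, formCoeff]
    congr 1
    refine Fin.insertNth_eq_iff.2 ⟨?_, ?_⟩
    · simp
    · funext l
      simp [Fin.removeNth]
  conv_lhs => rw [pi_eq_sum_univ' v, map_sum]
  simp only [map_smul, formCoeff, sum_apply, smul_apply, smul_eq_mul]
  exact Finset.sum_congr rfl fun t _ => congrArg (v t * ·) (hbasis t)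

lemma norm_curryMid_apply_le
    (U : ContinuousMultilinearMap ℝ (fun _ : Fin (n + 1) => (Fin N → ℝ)) ℝ) (k : Fin (n + 1))
    {v : Fin N → ℝ} (hv : ∀ t, |v t| ≤ 1) : ‖U.curryMid k v‖ ≤ ‖U‖ :=
  ((U.curryMid k).unit_le_opNorm v ((pi_norm_le_iff_of_nonneg zero_le_one).2 hv)).trans_eq
    (U.norm_curryMid k)

lemma BHreal_le_iff (hn : n ≠ 0) (U : ContinuousMultilinearMap ℝ (fun _ : Fin n => (Fin N → ℝ)) ℝ)
    {M : ℝ} (hM : 0 ≤ M) :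
    BHreal n N U ≤ M ↔
      ∑ i, |formCoeff U i| ^ (2 * n / (n + 1) : ℝ) ≤ M ^ (2 * n / (n + 1) : ℝ) := by
  rw [← Real.rpow_inv_le_iff_of_pos (by positivity) hM (by positivity), inv_div]
  rfl

lemma BHreal_one_le (U : ContinuousMultilinearMap ℝ (fun _ : Fin 1 => (Fin N → ℝ)) ℝ) :
    BHreal 1 N U ≤ ‖U‖ := by
  set a : Fin N → ℝ := fun t => formCoeff U ((0 : Fin 1).insertNth t finZeroElim)
  have hsum : ∑ i, |formCoeff U i| = ∑ t, |a t| := by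
    simp [sum_eq_sum_sum_insertNth 0, a, Subsingleton.elim _ finZeroElim]
  have hsign : ∑ t, |a t| = formCoeff (U.curryMid 0 fun t => SignType.sign (a t)) finZeroElim := by
    simp only [formCoeff_curryMid, a, sign_mul_self]
  have hexponent : (2 * (1 : ℕ) / ((1 : ℕ) + 1) : ℝ) = 1 := by norm_num
  rw [BHreal_le_iff one_ne_zero U (norm_nonneg U)]
  simp only [hexponent, Real.rpow_one]
  calc ∑ i, |formCoeff U i|
      ≤ |formCoeff (U.curryMid 0 fun t => SignType.sign (a t)) finZeroElim| := by
        rw [hsum, hsign]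
        exact le_abs_self _
    _ ≤ ‖U.curryMid 0 fun t => SignType.sign (a t)‖ := abs_formCoeff_le _ _
    _ ≤ ‖U‖ := norm_curryMid_apply_le U 0 fun t => by
        rcases SignType.sign (a t) with _ | _ | _ <;> simp

lemma sum_rpow_sum_sq_formCoeff_le (hn : n ≠ 0) {B C : ℝ} (hB : 0 ≤ B) (hC : 0 ≤ C)
    (hkhinchin : KhinchinBound (Fin N) (2 * n / (n + 1)) C)
    (hBH : ∀ V : ContinuousMultilinearMap ℝ (fun _ : Fin n => (Fin N → ℝ)) ℝ,
      BHreal n N V ≤ B * ‖V‖)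
    (U : ContinuousMultilinearMap ℝ (fun _ : Fin (n + 1) => (Fin N → ℝ)) ℝ) (k : Fin (n + 1)) :
    ∑ j, lineSum k (fun i => formCoeff U i ^ 2) j ^ (n / (n + 1) : ℝ) ≤
      (C * (B * ‖U‖)) ^ (2 * n / (n + 1) : ℝ) := by
  set p : ℝ := 2 * n / (n + 1)
  have : 0 ≤ p := by positivity
  have hhalf : (n / (n + 1) : ℝ) = p / 2 := by ring
  have hsigns : ∀ ε : Fin N → ℤˣ,
      ∑ j, |rademacherSum (fun t => formCoeff U (k.insertNth t j)) ε| ^ p ≤ (B * ‖U‖) ^ p := by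
    intro ε
    have hcurry : ‖U.curryMid k fun t => (ε t : ℝ)‖ ≤ ‖U‖ :=
      norm_curryMid_apply_le U k fun t => (abs_intUnit_cast (ε t)).le
    simp only [rademacherSum, ← formCoeff_curryMid U k fun t => (ε t : ℝ)]
    rw [← BHreal_le_iff hn _ (by positivity)]
    exact (hBH _).trans (by gcongr)
  calc ∑ j, lineSum k (fun i => formCoeff U i ^ 2) j ^ (n / (n + 1) : ℝ)
      ≤ ∑ j, C ^ p * 𝔼 ε, |rademacherSum (fun t => formCoeff U (k.insertNth t j)) ε| ^ p := by
        rw [hhalf]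
        exact Finset.sum_le_sum fun j _ => hkhinchin _
    _ = C ^ p * 𝔼 ε, ∑ j, |rademacherSum (fun t => formCoeff U (k.insertNth t j)) ε| ^ p := by
        rw [← Finset.mul_sum, Finset.expect_sum_comm]
    _ ≤ C ^ p * (B * ‖U‖) ^ p := by
        gcongr
        exact Finset.expect_le Finset.univ_nonempty fun ε _ => hsigns ε
    _ = (C * (B * ‖U‖)) ^ p := (Real.mul_rpow hC (by positivity)).symm

theorem BHreal_succ_le (hn : 1 ≤ n) {B C : ℝ} (hB : 0 ≤ B) (hC : 0 ≤ C)
    (hkhinchin : KhinchinBound (Fin N) (2 * n / (n + 1)) C)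
    (hBH : ∀ V : ContinuousMultilinearMap ℝ (fun _ : Fin n => (Fin N → ℝ)) ℝ,
      BHreal n N V ≤ B * ‖V‖)
    (U : ContinuousMultilinearMap ℝ (fun _ : Fin (n + 1) => (Fin N → ℝ)) ℝ) :
    BHreal (n + 1) N U ≤ C * B * ‖U‖ := by
  have hmixed : ∑ i, |formCoeff U i| ^ (2 * (n + 1) / (n + 2) : ℝ) ≤
      ∏ k, (∑ j, lineSum k (fun i => formCoeff U i ^ 2) j ^ (n / (n + 1) : ℝ)) ^
        ((n + 1) / (n * (n + 2)) : ℝ) := by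
    have h := sum_rpow_le_prod_sum_lineSum_rpow hn fun i => ‖formCoeff U i‖₊ ^ 2
    simp only [← NNReal.rpow_natCast, ← NNReal.rpow_mul] at h
    rw [← NNReal.coe_le_coe] at h
    simpa [lineSum, mul_div_assoc] using h
  rw [mul_assoc, BHreal_le_iff n.succ_ne_zero U (by positivity)]
  push_cast
  rw [add_assoc, one_add_one_eq_two]
  calc ∑ i, |formCoeff U i| ^ (2 * (n + 1) / (n + 2) : ℝ)
      ≤ ∏ _k : Fin (n + 1), ((C * (B * ‖U‖)) ^ (2 * n / (n + 1) : ℝ)) ^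
          ((n + 1) / (n * (n + 2)) : ℝ) := by
        have hnonneg : ∀ k, 0 ≤ ∑ j, lineSum k (fun i => formCoeff U i ^ 2) j ^ (n / (n + 1) : ℝ) :=
          fun k => Finset.sum_nonneg fun j _ =>
            Real.rpow_nonneg (lineSum_nonneg k (fun i => sq_nonneg (formCoeff U i)) j) _
        refine hmixed.trans (Finset.prod_le_prod (fun k _ => Real.rpow_nonneg (hnonneg k) _)
          fun k _ => Real.rpow_le_rpow (hnonneg k) ?_ (by positivity))
        exact sum_rpow_sum_sq_formCoeff_le (by omega) hB hC hkhinchin hBH U k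
    _ = (C * (B * ‖U‖)) ^ (2 * (n + 1) / (n + 2) : ℝ) := by
        have hM : 0 ≤ C * (B * ‖U‖) := by positivity
        rw [Finset.prod_const, Finset.card_univ, Fintype.card_fin, ← Real.rpow_mul hM,
          ← Real.rpow_mul_natCast hM]
        congr 1
        push_cast
        field_simp

lemma exp_inv_le_div_sub_one {x : ℝ} (hx : 1 < x) : exp x⁻¹ ≤ x / (x - 1) := by
  have : 0 < x - 1 := by linarith
  have hneg : (x / (x - 1))⁻¹ ≤ exp (-x⁻¹) := by
    calc (x / (x - 1))⁻¹ = -x⁻¹ + 1 := by field_simp; ring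
      _ ≤ exp (-x⁻¹) := Real.add_one_le_exp _
  rw [Real.exp_neg] at hneg
  exact (inv_le_inv₀ (by positivity) (exp_pos _)).1 hneg

lemma rpow_inv_mul_sub_one_rpow_le {c s x : ℝ} (hc : 0 ≤ c) (hs : 0 ≤ s) (hcs : c ≤ exp s)
    (hx : 1 < x) : c ^ x⁻¹ * (x - 1) ^ s ≤ x ^ s := by
  have hpred : 0 < x - 1 := by linarith
  calc c ^ x⁻¹ * (x - 1) ^ s ≤ exp s ^ x⁻¹ * (x - 1) ^ s := by gcongr
    _ = (exp x⁻¹ * (x - 1)) ^ s := by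
        rw [Real.mul_rpow (exp_pos _).le hpred.le, ← Real.exp_mul, ← Real.exp_mul, mul_comm s]
    _ ≤ (x / (x - 1) * (x - 1)) ^ s := by
        gcongr
        exact exp_inv_le_div_sub_one hx
    _ = x ^ s := by rw [div_mul_cancel₀ _ hpred.ne']

theorem BHreal_le (hn : 2 ≤ n) (U : ContinuousMultilinearMap ℝ (fun _ : Fin n => (Fin N → ℝ)) ℝ) :
    BHreal n N U ≤ √2 * ((n : ℝ) - 1) ^ (0.526322 : ℝ) * ‖U‖ := by
  induction n, hn using Nat.le_induction with
  | base =>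
    have hexponent : (2 * (1 : ℕ) / ((1 : ℕ) + 1) : ℝ) = 1 := by norm_num
    have hbase : ((2 : ℕ) : ℝ) - 1 = 1 := by norm_num
    rw [hbase, Real.one_rpow]
    have hkhinchin : KhinchinBound (Fin N) (2 * (1 : ℕ) / ((1 : ℕ) + 1)) √2 := by
      rw [hexponent]
      exact khinchinBound_one
    exact BHreal_succ_le le_rfl zero_le_one (Real.sqrt_nonneg 2) hkhinchin
      (fun V => (BHreal_one_le V).trans_eq (one_mul _).symm) U
  | succ n hn ih =>
    have hn_two : (2 : ℝ) ≤ n := by exact_mod_cast hn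
    have hexp : (1.69 : ℝ) ≤ exp 0.526322 := by
      refine le_trans ?_ (Real.sum_le_exp_of_nonneg (x := 0.526322) (by norm_num) 5)
      simp only [Finset.sum_range_succ, Finset.sum_range_zero, Nat.factorial]
      norm_num
    have hconst := rpow_inv_mul_sub_one_rpow_le (by norm_num) (by norm_num) hexp
      (show (1 : ℝ) < n by linarith)
    calc BHreal (n + 1) N U
        ≤ 1.69 ^ (n : ℝ)⁻¹ * (√2 * ((n : ℝ) - 1) ^ (0.526322 : ℝ)) * ‖U‖ :=
          BHreal_succ_le (by omega) (by bound) (by positivity)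
            (khinchinBound_two_mul_div_succ (by omega)) ih U
      _ = √2 * (1.69 ^ (n : ℝ)⁻¹ * ((n : ℝ) - 1) ^ (0.526322 : ℝ)) * ‖U‖ := by ring
      _ ≤ √2 * (((n + 1 : ℕ) : ℝ) - 1) ^ (0.526322 : ℝ) * ‖U‖ := by
          push_cast
          rw [add_sub_cancel_right]
          gcongr

end BohnenblustHille

theorem stmt0 (n : ℕ) (hn : 2 ≤ n) :
    (∀ N : ℕ, 0 < N →
      ∀ U : ContinuousMultilinearMap ℝ (fun _ : Fin n => (Fin N → ℝ)) ℝ,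
        BHreal n N U ≤ Real.sqrt 2 * ((n : ℝ) - 1) ^ (0.526322 : ℝ) * ‖U‖) ∧
    KrealOpt n ≤ Real.sqrt 2 * ((n : ℝ) - 1) ^ (0.526322 : ℝ) := by
  refine ⟨fun N _ U => BHreal_le hn U,
    csInf_le ⟨1, fun C hC => hC.1⟩ ⟨?_, fun N _ U => BHreal_le hn U⟩⟩
  have hbase : (1 : ℝ) ≤ n - 1 := by
    have : (2 : ℝ) ≤ n := by exact_mod_cast hn
    linarith
  exact one_le_mul_of_one_le_of_one_le (Real.one_le_sqrt.2 one_le_two)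
    (Real.one_le_rpow hbase (by norm_num))
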